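/- arXiv:1811.09200 — 7 statements merged into one kernel-verified Lean document; each statement's English description precedes it below -/
import Mathlib

section
/- Let f : X → Y be a continuous surjection of compact Hausdorff spaces. Then f is fully closed if and only if for each subset A ⊆ Y the quotient space Y_A is Hausdorff. -/
open Set Metric Topology Filter

/-- A continuous map of compacts is fully closed if images of disjoint closed sets
have finite intersection. -/
def FullyClosed {X Y : Type*} [TopologicalSpace X] [TopologicalSpace Y] (f : X → Y) : Prop :=
  ∀ A B : Set X, IsClosed A → IsClosed B → Disjoint A B → (f '' A ∩ f '' B).Finite

/-- The equivalence relation on `X` identifying `x` and `x'` whenever `f x = f x' ∉ A`.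
The quotient `Y_A` is `Quotient (fiberSetoid f A)`. -/
def fiberSetoid {X Y : Type*} (f : X → Y) (A : Set Y) : Setoid X where
  r x x' := x = x' ∨ (f x = f x' ∧ f x ∉ A)
  iseqv := by
    constructor
    · intro x; exact Or.inl rfl
    · rintro x y (rfl | ⟨e, hA⟩)
      · exact Or.inl rfl
      · exact Or.inr ⟨e.symm, e ▸ hA⟩
    · rintro x y z (rfl | ⟨e1, h1⟩) h2
      · exact h2
      · rcases h2 with rfl | ⟨e2, _⟩
        · exact Or.inr ⟨e1, h1⟩
        · exact Or.inr ⟨e1.trans e2, h1⟩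

/-- The key open set for the forward direction. -/
theorem fullyClosed_aux_isOpen
    {X Y : Type*} [TopologicalSpace X] [CompactSpace X] [T2Space X]
    [TopologicalSpace Y] [T2Space Y]
    (f : X → Y) (hf : Continuous f) (h : FullyClosed f) (y : Y) (U : Set X) (hU : IsOpen U) :
    IsOpen {z | z ∈ U ∧ (f z = y ∨ f z ∉ f '' Uᶜ)} := by
  rw [isOpen_iff_mem_nhds]
  rintro z ⟨hzU, hz⟩
  rcases hz with hz | hz
  · obtain ⟨K, hK, hKc, hKU⟩ := exists_mem_nhds_isClosed_subset (hU.mem_nhds hzU)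
    have hfin : (f '' K ∩ f '' Uᶜ).Finite :=
      h K Uᶜ hKc hU.isClosed_compl (Set.disjoint_left.2 fun a ha hb => hb (hKU ha))
    have hcl : IsClosed (f ⁻¹' ((f '' K ∩ f '' Uᶜ) \ {y})) :=
      (hfin.subset Set.diff_subset).isClosed.preimage hf
    have hn : (f ⁻¹' ((f '' K ∩ f '' Uᶜ) \ {y}))ᶜ ∈ 𝓝 z :=
      hcl.isOpen_compl.mem_nhds (fun hmem => hmem.2 hz)
    filter_upwards [hK, hn] with w hw1 hw2
    refine ⟨hKU hw1, ?_⟩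
    by_cases hwy : f w = y
    · exact Or.inl hwy
    · exact Or.inr fun hw3 => hw2 ⟨⟨⟨w, hw1, rfl⟩, hw3⟩, hwy⟩
  · have hcl : IsClosed (f ⁻¹' (f '' Uᶜ)) :=
      ((hU.isClosed_compl.isCompact.image hf).isClosed).preimage hf
    filter_upwards [hU.mem_nhds hzU, hcl.isOpen_compl.mem_nhds hz] with w h1 h2
    exact ⟨h1, Or.inr h2⟩

/-- The key set is saturated, so its image in the quotient is open. -/
theorem fullyClosed_aux_nhd
    {X Y : Type*} [TopologicalSpace X] [CompactSpace X] [T2Space X]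
    [TopologicalSpace Y] [T2Space Y]
    (f : X → Y) (hf : Continuous f) (h : FullyClosed f) (A : Set Y) (x : X) (hx : f x ∈ A)
    (U : Set X) (hU : IsOpen U) (hxU : x ∈ U) :
    ∃ W : Set (Quotient (fiberSetoid f A)), IsOpen W ∧
      (Quotient.mk (fiberSetoid f A) x) ∈ W ∧
      ∀ z, Quotient.mk (fiberSetoid f A) z ∈ W → z ∈ U := by
  set S := {z | z ∈ U ∧ (f z = f x ∨ f z ∉ f '' Uᶜ)} with hS
  have key : Quotient.mk (fiberSetoid f A) ⁻¹' (Quotient.mk (fiberSetoid f A) '' S) = S := by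
    apply Set.Subset.antisymm
    · rintro z ⟨w, ⟨hwU, hw⟩, hwz⟩
      have hr : w = z ∨ (f w = f z ∧ f w ∉ A) := Quotient.exact hwz
      rcases hr with rfl | ⟨e, hA⟩
      · exact ⟨hwU, hw⟩
      · rcases hw with hw | hw
        · exact absurd (hw ▸ hx) hA
        · rw [e] at hw
          refine ⟨?_, Or.inr hw⟩
          by_contra hz
          exact hw ⟨z, hz, rfl⟩
    · exact Set.subset_preimage_image _ _
  refine ⟨Quotient.mk (fiberSetoid f A) '' S, ?_, ⟨x, ⟨hxU, Or.inl rfl⟩, rfl⟩, ?_⟩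
  · have : IsOpen (Quotient.mk (fiberSetoid f A) ⁻¹' (Quotient.mk (fiberSetoid f A) '' S)) := by
      rw [key]
      exact fullyClosed_aux_isOpen f hf h (f x) U hU
    exact this
  · intro z hz
    have : z ∈ S := key ▸ hz
    exact this.1

/-- Proposition 2.2: `f` is fully closed iff all the quotients `Y_A`
are Hausdorff. -/
theorem fullyClosed_iff_quotients_t2
    {X Y : Type*} [TopologicalSpace X] [CompactSpace X] [T2Space X]
    [TopologicalSpace Y] [CompactSpace Y] [T2Space Y]
    (f : X → Y) (hf : Continuous f) (hsurj : Function.Surjective f) :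
    FullyClosed f ↔ ∀ A : Set Y, T2Space (Quotient (fiberSetoid f A)) := by
  constructor
  · intro h A
    refine ⟨fun p q => ?_⟩
    induction p using Quotient.inductionOn with | _ x
    induction q using Quotient.inductionOn with | _ x'
    intro hne
    by_cases hfx : f x = f x'
    · have hxx : x ≠ x' := fun e => hne (e ▸ rfl)
      have hxA : f x ∈ A := by
        by_contra hA
        exact hne (Quotient.sound (Or.inr ⟨hfx, hA⟩))
      obtain ⟨U, V, hU, hV, hxU, hxV, hd⟩ := t2_separation hxx
      obtain ⟨W, hW, hxW, hWU⟩ := fullyClosed_aux_nhd f hf h A x hxA U hU hxU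
      obtain ⟨W', hW', hxW', hWV⟩ := fullyClosed_aux_nhd f hf h A x' (hfx ▸ hxA) V hV hxV
      refine ⟨W, W', hW, hW', hxW, hxW', Set.disjoint_left.2 fun p h1 h2 => ?_⟩
      induction p using Quotient.inductionOn with | _ z
      exact Set.disjoint_left.1 hd (hWU z h1) (hWV z h2)
    · have hl : ∀ a b : X, (fiberSetoid f A).r a b → f a = f b := by
        rintro a b (rfl | ⟨e, _⟩)
        · rfl
        · exact e
      have hg : Continuous (Quotient.lift f hl) := hf.quotient_lift hl
      exact separated_by_continuous (f := Quotient.lift f hl) hg hfx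
  · intro h C B hC hB hd
    by_contra hinf
    obtain ⟨y, hy⟩ := Set.Infinite.exists_accPt_principal hinf
    have := h {y}
    have hR : IsClosed {p : X × X | Quotient.mk (fiberSetoid f {y}) p.1 =
        Quotient.mk (fiberSetoid f {y}) p.2} :=
      isClosed_eq (continuous_quotient_mk'.comp continuous_fst)
        (continuous_quotient_mk'.comp continuous_snd)
    have hS := (hR.inter (hC.prod hB)).isCompact
    have hI := (hS.image (hf.comp continuous_fst)).isClosed
    rw [accPt_principal_iff_clusterPt, ← mem_closure_iff_clusterPt] at hy
    have hsub := closure_minimal (t := (f ∘ Prod.fst) '' ({p : X × X |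
        Quotient.mk (fiberSetoid f {y}) p.1 = Quotient.mk (fiberSetoid f {y}) p.2} ∩ C ×ˢ B))
        (by
          rintro w ⟨⟨⟨c, hc, rfl⟩, ⟨b, hb, hcb⟩⟩, hw⟩
          exact ⟨(c, b), ⟨Quotient.sound (Or.inr ⟨hcb.symm, hw⟩), hc, hb⟩, rfl⟩) hI hy
    obtain ⟨⟨c, b⟩, ⟨hcb, hc, hb⟩, hcy⟩ := hsub
    have hr : c = b ∨ (f c = f b ∧ f c ∉ ({y} : Set Y)) := Quotient.exact hcb
    rcases hr with rfl | ⟨_, hn⟩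
    · exact Set.disjoint_left.1 hd hc hb
    · exact hn hcy
end

section
/- Let f : X → Y be a fully closed continuous surjection of a compact Hausdorff space X onto a metrizable compact space Y such that every fiber f⁻¹(y), y ∈ Y, is metrizable. Then X is metrizable if and only if the set of nontrivial fibers of f (that is, the set of points y ∈ Y for which f⁻¹(y) is not a singleton) is countable. -/
open Set Metric Topology Filter

/-- Proposition 2.3: for a fully closed map onto a metrizable compact with
metrizable fibers, the total space is metrizable iff the set of nontrivial fibers is
countable. -/
theorem metrizable_iff_countably_many_nontrivial_fibers
    {X Y : Type*} [TopologicalSpace X] [CompactSpace X] [T2Space X]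
    [TopologicalSpace Y] [CompactSpace Y] [T2Space Y] [TopologicalSpace.MetrizableSpace Y]
    (f : X → Y) (hf : Continuous f) (hsurj : Function.Surjective f)
    (hfc : FullyClosed f)
    (hfib : ∀ y : Y, TopologicalSpace.MetrizableSpace (f ⁻¹' {y})) :
    TopologicalSpace.MetrizableSpace X ↔
      {y : Y | ¬ (f ⁻¹' {y}).Subsingleton}.Countable := by
  constructor
  · intro hX
    let b := TopologicalSpace.countableBasis X
    have hb : TopologicalSpace.IsTopologicalBasis b := TopologicalSpace.isBasis_countableBasis X
    have hc : b.Countable := TopologicalSpace.countable_countableBasis X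
    have hpc : {p : Set X × Set X | p ∈ b ×ˢ b ∧ Disjoint (closure p.1) (closure p.2)}.Countable :=
      (hc.prod hc).mono fun p hp => hp.1
    refine (hpc.biUnion (t := fun p _ => f '' closure p.1 ∩ f '' closure p.2) ?_).mono ?_
    · intro p hp
      exact (hfc _ _ isClosed_closure isClosed_closure hp.2).countable
    · intro y hy
      simp only [mem_ofPred_eq, Set.not_subsingleton_iff] at hy
      obtain ⟨x, hx, x', hx', hne⟩ := hy
      obtain ⟨U, hxU, hUo, V, hxV, hVo, hd⟩ := exists_open_nhds_disjoint_closure hne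
      obtain ⟨U', hU', hxU', hUU⟩ := hb.exists_subset_of_mem_open hxU hUo
      obtain ⟨V', hV', hxV', hVV⟩ := hb.exists_subset_of_mem_open hxV hVo
      refine mem_iUnion₂.2 ⟨(U', V'), ⟨⟨hU', hV'⟩,
        hd.mono (closure_mono hUU) (closure_mono hVV)⟩, ?_⟩
      exact ⟨⟨x, subset_closure hxU', hx⟩, ⟨x', subset_closure hxV', hx'⟩⟩
  · intro hN
    have key : ∀ y : Y, ∃ g : C(X, ℕ → ℝ), InjOn g (f ⁻¹' {y}) := by
      intro y
      have := hfib y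
      have hcl : IsClosed (f ⁻¹' {y}) := isClosed_singleton.preimage hf
      have : CompactSpace (f ⁻¹' {y}) := isCompact_iff_compactSpace.1 hcl.isCompact
      obtain ⟨e, he⟩ := TopologicalSpace.exists_embedding_l_infty (f ⁻¹' {y})
      let e' : C(f ⁻¹' {y}, ℕ → ℝ) :=
        ⟨fun x n => e x n, by
          refine continuous_pi fun n => ?_
          exact (BoundedContinuousFunction.lipschitz_eval_const n).continuous.comp he.continuous⟩
      obtain ⟨g, hg⟩ := ContinuousMap.exists_restrict_eq hcl e'
      refine ⟨g, fun a ha c hc hac => ?_⟩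
      have h1 : g a = e' ⟨a, ha⟩ := by rw [← hg]; rfl
      have h2 : g c = e' ⟨c, hc⟩ := by rw [← hg]; rfl
      have h3 : e ⟨a, ha⟩ = e ⟨c, hc⟩ := by
        ext n
        exact congrFun (h1.symm.trans (hac.trans h2)) n
      exact congrArg Subtype.val (he.injective h3)
    choose g hg using key
    let N : Set Y := {y : Y | ¬ (f ⁻¹' {y}).Subsingleton}
    have : Countable N := hN.to_subtype
    let F : X → Y × (N → ℕ → ℝ) := fun x => (f x, fun y => g y x)
    have hF : Continuous F :=
      hf.prodMk (continuous_pi fun y => (g y).continuous)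
    have hinj : Function.Injective F := by
      intro a c hac
      have h1 : f a = f c := congrArg Prod.fst hac
      by_cases h : (f ⁻¹' {f c}).Subsingleton
      · exact h h1 rfl
      · exact hg (f c) h1 rfl (congrFun (congrArg Prod.snd hac) ⟨f c, h⟩)
    exact (hF.isClosedEmbedding hinj).isEmbedding.metrizableSpace
end

section
/- Let f : X → Y be a fully closed continuous surjection of compact Hausdorff spaces. Then for every continuous real function h on X, the fiberwise oscillation Ω_f(h) belongs to c₀(Y); that is, for every ε > 0 the set {y ∈ Y : Ω_f(h)(y) ≥ ε} is finite. -/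
open Set Metric Topology Filter

/-- The fiberwise oscillation `Ω_f(h)(y) = diam (h '' (f⁻¹ {y}))`. -/
noncomputable def fiberOsc {X Y : Type*} [TopologicalSpace X]
    (f : X → Y) (h : C(X, ℝ)) (y : Y) : ℝ :=
  Metric.diam (h '' (f ⁻¹' {y}))

/-- Corollary 3.2: for a fully closed map `f`, the fiberwise oscillation of
any continuous function lies in `c₀(Y)`. -/
theorem fiberOsc_mem_c0_of_fullyClosed
    {X Y : Type*} [TopologicalSpace X] [CompactSpace X] [T2Space X]
    [TopologicalSpace Y] [CompactSpace Y] [T2Space Y]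
    (f : X → Y) (hf : Continuous f) (hsurj : Function.Surjective f)
    (hfc : FullyClosed f) :
    ∀ (h : C(X, ℝ)) (ε : ℝ), 0 < ε → {y : Y | ε ≤ fiberOsc f h y}.Finite := by
  intro h ε hε
  obtain ⟨M, hM⟩ : ∃ M : ℝ, ∀ x, |h x| ≤ M := by
    obtain ⟨M, hM⟩ := (isCompact_range h.continuous).isBounded.exists_norm_le
    exact ⟨M, fun x => hM _ ⟨x, rfl⟩⟩
  obtain ⟨δ, hδ, hδε⟩ : ∃ δ : ℝ, 0 < δ ∧ 3 * δ < ε := ⟨ε / 4, by linarith, by linarith⟩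
  have key : ∀ k : ℤ, (f '' {x | h x ≤ k * δ} ∩ f '' {x | (k + 1) * δ ≤ h x}).Finite := by
    intro k
    apply hfc
    · exact isClosed_le h.continuous continuous_const
    · exact isClosed_le continuous_const h.continuous
    · rw [Set.disjoint_left]
      intro x hx hx'
      simp only [Set.mem_setOf_eq] at hx hx'
      linarith
  refine ((Set.finite_Icc ⌈-M / δ⌉ ⌈M / δ⌉).biUnion (fun k _ => key k)).subset ?_
  intro y hy
  simp only [Set.mem_setOf_eq, fiberOsc] at hy
  obtain ⟨s, t, hs, ht, hst⟩ : ∃ s t, f s = y ∧ f t = y ∧ 3 * δ < h t - h s := by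
    by_contra! hcon
    have : Metric.diam (h '' (f ⁻¹' {y})) ≤ 3 * δ := by
      apply Metric.diam_le_of_forall_dist_le (by linarith)
      rintro _ ⟨a, ha, rfl⟩ _ ⟨b, hb, rfl⟩
      rw [Real.dist_eq, abs_le]
      have h1 := hcon a b ha hb
      have h2 := hcon b a hb ha
      constructor <;> linarith
    linarith
  have hMs := abs_le.1 (hM s)
  have h1 : h s ≤ ⌈h s / δ⌉ * δ := (div_le_iff₀ hδ).1 (Int.le_ceil _)
  have h2 : (⌈h s / δ⌉ : ℝ) * δ < h s + δ := by
    have h3 := mul_lt_mul_of_pos_right (Int.ceil_lt_add_one (h s / δ)) hδ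
    rwa [add_mul, div_mul_cancel₀ _ hδ.ne', one_mul] at h3
  refine Set.mem_biUnion (x := ⌈h s / δ⌉) ⟨?_, ?_⟩ ⟨⟨s, h1, hs⟩, ⟨t, ?_, ht⟩⟩
  · exact Int.ceil_mono (by gcongr; exact hMs.1)
  · exact Int.ceil_mono (by gcongr; exact hMs.2)
  · simp only [Set.mem_setOf_eq]
    linarith
end

section
/- Let f : X → Y be a fully closed continuous surjection of a compact Hausdorff space X onto a metrizable compact space Y such that every fiber f⁻¹(y) is metrizable. Then for every countable subset A ⊆ Y, the subspace Z_A of C(X) is separable in the supremum norm. -/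
open Set Metric Topology Filter

theorem osc_zero_const {X Y : Type*} [TopologicalSpace X] [CompactSpace X]
    (f : X → Y) (h : C(X, ℝ)) (y : Y) (h0 : fiberOsc f h y = 0)
    (x x' : X) (hx : f x = y) (hx' : f x' = y) : h x = h x' := by
  have hb : Bornology.IsBounded (h '' (f ⁻¹' {y})) :=
    (isCompact_range h.continuous).isBounded.subset (image_subset_range _ _)
  have := Metric.dist_le_diam_of_mem hb (mem_image_of_mem h (show x ∈ f ⁻¹' {y} from hx))
    (mem_image_of_mem h (show x' ∈ f ⁻¹' {y} from hx'))
  unfold fiberOsc at h0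
  rw [h0] at this
  exact dist_le_zero.1 this

/-- A set of functions that becomes continuous on a second countable space which sees every
value is separable. -/
theorem separable_of_param {X T : Type*} [TopologicalSpace X] [CompactSpace X]
    [TopologicalSpace T] [SecondCountableTopology T] (Z : Set C(X, ℝ)) (g : T → X)
    (hg : ∀ h ∈ Z, Continuous (fun t => h (g t)))
    (hs : ∀ x, ∃ t, ∀ h ∈ Z, h x = h (g t)) : TopologicalSpace.IsSeparable Z := by
  obtain ⟨D, hD, hDU⟩ := TopologicalSpace.isOpen_iUnion_countable
    (fun h : Z => {p : T × T | h.1 (g p.1) ≠ h.1 (g p.2)})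
    (fun h => isOpen_ne_fun ((hg h.1 h.2).comp continuous_fst) ((hg h.1 h.2).comp continuous_snd))
  have : Countable D := hD.to_subtype
  let Ψ : X → (D → ℝ) := fun x d => d.1.1 x
  have hΨ : Continuous Ψ := continuous_pi fun d => d.1.1.continuous
  have hsep : ∀ x x', Ψ x = Ψ x' → ∀ h ∈ Z, h x = h x' := by
    intro x x' hxx h hh
    by_contra hne
    obtain ⟨t, ht⟩ := hs x
    obtain ⟨t', ht'⟩ := hs x'
    have : (t, t') ∈ ⋃ h : Z, {p : T × T | h.1 (g p.1) ≠ h.1 (g p.2)} := by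
      refine mem_iUnion.2 ⟨⟨h, hh⟩, ?_⟩
      simpa [← ht h hh, ← ht' h hh] using hne
    rw [← hDU] at this
    simp only [mem_iUnion] at this
    obtain ⟨d, hd, hdt⟩ := this
    apply hdt
    change d.1 (g t) = d.1 (g t')
    rw [← ht d.1 d.2, ← ht' d.1 d.2]
    exact congrFun hxx ⟨d, hd⟩
  have : CompactSpace (range Ψ) := isCompact_iff_compactSpace.1 (isCompact_range hΨ)
  let q : C(X, range Ψ) := ⟨rangeFactorization Ψ, hΨ.subtype_mk _⟩
  have hq : IsQuotientMap q :=
    q.continuous.isClosedMap.isQuotientMap q.continuous rangeFactorization_surjective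
  have hsub : Z ⊆ (fun k : C(range Ψ, ℝ) => k.comp q) '' univ := by
    intro h hh
    refine ⟨hq.lift h fun a b hab => hsep a b (congrArg Subtype.val hab) h hh, mem_univ _, ?_⟩
    exact hq.lift_comp _ _
  exact ((TopologicalSpace.IsSeparable.of_separableSpace univ).image
    (ContinuousMap.continuous_precomp q)).mono hsub

/-- for countable `A ⊆ Y` the subspace `Z_A` of `C(X)` is separable in the
supremum norm. -/
theorem ZA_separable_of_countable
    {X Y : Type*} [TopologicalSpace X] [CompactSpace X] [T2Space X]
    [TopologicalSpace Y] [CompactSpace Y] [T2Space Y] [TopologicalSpace.MetrizableSpace Y]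
    (f : X → Y) (hf : Continuous f) (hsurj : Function.Surjective f)
    (hfc : FullyClosed f)
    (hfib : ∀ y : Y, TopologicalSpace.MetrizableSpace (f ⁻¹' {y}))
    (A : Set Y) (hA : A.Countable) :
    TopologicalSpace.IsSeparable {h : C(X, ℝ) | ∀ y ∉ A, fiberOsc f h y = 0} := by
  have : Countable A := hA.to_subtype
  have hY : SecondCountableTopology Y := by
    letI := TopologicalSpace.metrizableSpaceMetric Y
    infer_instance
  have hF : ∀ y : A, SecondCountableTopology (f ⁻¹' {(y : Y)}) := by
    intro y
    have := hfib y
    have : CompactSpace (f ⁻¹' {(y : Y)}) :=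
      isCompact_iff_compactSpace.1 (isClosed_singleton.preimage hf).isCompact
    letI := TopologicalSpace.metrizableSpaceMetric (f ⁻¹' {(y : Y)})
    infer_instance
  let s := Function.surjInv hsurj
  have hs : ∀ y, f (s y) = y := Function.surjInv_eq hsurj
  refine separable_of_param (T := (Aᶜ : Set Y) ⊕ (Σ y : A, f ⁻¹' {(y : Y)})) _
    (Sum.elim (fun y => s y) (fun p => p.2.1)) ?_ ?_
  · intro h hh
    refine continuous_sum_dom.2 ⟨?_, ?_⟩
    · have hq : IsQuotientMap (Aᶜ.restrictPreimage f) :=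
        (hf.isClosedMap.restrictPreimage Aᶜ).isQuotientMap hf.restrictPreimage
          (hsurj.restrictPreimage Aᶜ)
      rw [hq.continuous_iff]
      convert h.continuous.comp (continuous_subtype_val (p := (· ∈ f ⁻¹' Aᶜ))) using 1
      ext x
      exact osc_zero_const f h (f x) (hh _ x.2) _ _ (hs _) rfl
    · exact continuous_sigma fun y => h.continuous.comp continuous_subtype_val
  · intro x
    by_cases hx : f x ∈ A
    · exact ⟨Sum.inr ⟨⟨f x, hx⟩, ⟨x, rfl⟩⟩, fun h _ => rfl⟩
    · exact ⟨Sum.inl ⟨f x, hx⟩, fun h hh =>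
        osc_zero_const f h (f x) (hh _ hx) _ _ rfl (hs _)⟩
end

section
/- ia Let f : X → Y be a fully closed continuous surjection of a compact Hausdorff space X onto a metrizable compact space Y with metrizable fibers f⁻¹(y), y ∈ Y. Let K be a finite subset of a countable set A ⊆ Y. Then for every h ∈ Z_A one has dist(h, Z_K) = inf{‖h − g‖_∞ : g ∈ Z_K} ≤ sup{Ω_f(h)(y) : y ∈ A∖K}. -/
open Set Metric Topology Filter

lemma normal_of_closed_surj {X Q : Type*} [TopologicalSpace X] [NormalSpace X]
    [TopologicalSpace Q] (p : X → Q) (hp : Continuous p) (hs : Function.Surjective p)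
    (hc : IsClosedMap p) : NormalSpace Q := by
  refine ⟨fun S T hS hT hST => ?_⟩
  obtain ⟨U, V, hU, hV, hSU, hTV, hUV⟩ :=
    NormalSpace.normal (p ⁻¹' S) (p ⁻¹' T) (hS.preimage hp) (hT.preimage hp) (hST.preimage p)
  refine ⟨(p '' Uᶜ)ᶜ, (p '' Vᶜ)ᶜ, (hc _ hU.isClosed_compl).isOpen_compl,
    (hc _ hV.isClosed_compl).isOpen_compl, ?_, ?_, ?_⟩
  · rintro q hq ⟨x, hx, rfl⟩
    exact hx (hSU hq)
  · rintro q hq ⟨x, hx, rfl⟩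
    exact hx (hTV hq)
  · rw [Set.disjoint_left]
    intro q h1 h2
    obtain ⟨x, rfl⟩ := hs q
    have hxU : x ∈ U := by
      by_contra hx
      exact h1 ⟨x, hx, rfl⟩
    have hxV : x ∈ V := by
      by_contra hx
      exact h2 ⟨x, hx, rfl⟩
    exact Set.disjoint_left.1 hUV hxU hxV

/-- Collapse all fibers of `f` except those over `K`. -/
def collapseSetoid {X Y : Type*} (f : X → Y) (K : Set Y) : Setoid X where
  r x y := x = y ∨ (f x = f y ∧ f x ∉ K)
  iseqv := by
    refine ⟨fun x => Or.inl rfl, ?_, ?_⟩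
    · rintro x y (rfl | ⟨h1, h2⟩)
      · exact Or.inl rfl
      · exact Or.inr ⟨h1.symm, h1 ▸ h2⟩
    · rintro x y z (rfl | ⟨h1, h2⟩) (rfl | ⟨h3, h4⟩)
      · exact Or.inl rfl
      · exact Or.inr ⟨h3, h4⟩
      · exact Or.inr ⟨h1, h2⟩
      · exact Or.inr ⟨h1.trans h3, h2⟩

lemma collapse_eq_iff {X Y : Type*} (f : X → Y) (K : Set Y) (x y : X) :
    (Quotient.mk (collapseSetoid f K) x = Quotient.mk (collapseSetoid f K) y) ↔
      (x = y ∨ (f x = f y ∧ f x ∉ K)) := Quotient.eq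

lemma collapse_closed {X Y : Type*} [TopologicalSpace X] [CompactSpace X] [T2Space X]
    [TopologicalSpace Y] [T2Space Y] (f : X → Y) (hf : Continuous f)
    (hfc : FullyClosed f) (K : Set Y) :
    IsClosedMap (Quotient.mk (collapseSetoid f K)) := by
  intro C hC
  rw [← isOpen_compl_iff, ← isQuotientMap_quotient_mk'.isOpen_preimage, isOpen_iff_mem_nhds]
  intro x hx
  have hx' : ∀ c ∈ C, ¬ (c = x ∨ (f c = f x ∧ f c ∉ K)) := fun c hc h =>
    hx ⟨c, hc, (collapse_eq_iff f K c x).2 h⟩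
  have hxC : x ∉ C := fun h => hx' x h (Or.inl rfl)
  suffices H : ∀ᶠ z in 𝓝 x, ∀ c ∈ C, ¬ (c = z ∨ (f c = f z ∧ f c ∉ K)) by
    filter_upwards [H] with z hz
    rintro ⟨c, hc, hcz⟩
    exact hz c hc ((collapse_eq_iff f K c z).1 hcz)
  have hCev : ∀ᶠ z in 𝓝 x, z ∉ C := hC.isOpen_compl.mem_nhds hxC
  by_cases hK : f x ∈ K
  · obtain ⟨V, hV, hVc, hVC⟩ := exists_mem_nhds_isClosed_subset (hC.isOpen_compl.mem_nhds hxC)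
    have hfin := hfc V C hVc hC (Set.disjoint_left.2 fun z hz => hVC hz)
    have h2 : ∀ᶠ z in 𝓝 x, f z ∉ (f '' V ∩ f '' C) \ {f x} :=
      hf.continuousAt.eventually
        ((hfin.subset diff_subset).isClosed.isOpen_compl.mem_nhds (by simp))
    filter_upwards [hCev, hV, h2] with z hz hzV hz2 c hc
    rintro (rfl | ⟨h3, h4⟩)
    · exact hz hc
    · refine hz2 ⟨⟨⟨z, hzV, rfl⟩, ⟨c, hc, h3⟩⟩, fun h5 => ?_⟩
      have h5' : f z = f x := h5
      exact h4 (by rw [h3, h5']; exact hK)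
  · have h1 : f x ∉ f '' C := by
      rintro ⟨c, hc, h⟩
      exact hx' c hc (Or.inr ⟨h, h ▸ hK⟩)
    have h2 : ∀ᶠ z in 𝓝 x, f z ∉ f '' C :=
      hf.continuousAt.eventually ((hC.isCompact.image hf).isClosed.isOpen_compl.mem_nhds h1)
    filter_upwards [hCev, h2] with z hz hz2 c hc
    rintro (rfl | ⟨h3, h4⟩)
    · exact hz hc
    · exact hz2 ⟨c, hc, h3⟩

/-- Proposition 3.4: for a finite subset `K` of a countable set `A ⊆ Y`
and `h ∈ Z_A`, the distance from `h` to `Z_K` is at most `sup {Ω_f(h)(y) : y ∈ A \ K}`. -/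
theorem dist_to_ZK_le_sup_osc
    {X Y : Type*} [TopologicalSpace X] [CompactSpace X] [T2Space X]
    [TopologicalSpace Y] [CompactSpace Y] [T2Space Y] [TopologicalSpace.MetrizableSpace Y]
    (f : X → Y) (hf : Continuous f) (hsurj : Function.Surjective f)
    (hfc : FullyClosed f)
    (hfib : ∀ y : Y, TopologicalSpace.MetrizableSpace (f ⁻¹' {y}))
    (A : Set Y) (hA : A.Countable) (K : Set Y) (hK : K.Finite) (hKA : K ⊆ A)
    (h : C(X, ℝ)) (hh : ∀ y ∉ A, fiberOsc f h y = 0) :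
    Metric.infDist h {g : C(X, ℝ) | ∀ y ∉ K, fiberOsc f g y = 0} ≤
      sSup (fiberOsc f h '' (A \ K)) := by
  set s := sSup (fiberOsc f h '' (A \ K)) with hs
  have hb : Bornology.IsBounded (range h) := (isCompact_range h.continuous).isBounded
  have hs0 : 0 ≤ s := by
    apply Real.sSup_nonneg
    rintro _ ⟨y, -, rfl⟩
    exact Metric.diam_nonneg
  have hbdd : BddAbove (fiberOsc f h '' (A \ K)) := by
    refine ⟨Metric.diam (range h), ?_⟩
    rintro _ ⟨y, -, rfl⟩
    exact Metric.diam_mono (image_subset_range _ _) hb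
  have hosc : ∀ y ∉ K, fiberOsc f h y ≤ s := by
    intro y hy
    by_cases hyA : y ∈ A
    · exact le_csSup hbdd ⟨y, ⟨hyA, hy⟩, rfl⟩
    · rw [hh y hyA]; exact hs0
  have hpt : ∀ x z, f x = f z → f x ∉ K → dist (h x) (h z) ≤ s := by
    intro x z hxz hx
    refine le_trans ?_ (hosc _ hx)
    exact Metric.dist_le_diam_of_mem (hb.subset (image_subset_range _ _))
      ⟨x, rfl, rfl⟩ ⟨z, hxz.symm, rfl⟩
  have hcl := collapse_closed f hf hfc K
  have hcont : Continuous (Quotient.mk (collapseSetoid f K)) := continuous_quotient_mk'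
  haveI : NormalSpace (Quotient (collapseSetoid f K)) :=
    normal_of_closed_surj _ hcont Quotient.mk_surjective hcl
  haveI : CompactSpace (Quotient (collapseSetoid f K)) := Quotient.compactSpace
  refine le_of_forall_pos_le_add fun ε hε => ?_
  obtain ⟨g, hg⟩ := exists_continuous_forall_mem_convex_of_local_const
    (X := Quotient (collapseSetoid f K)) (E := ℝ)
    (t := fun q => ⋂ x ∈ Quotient.mk (collapseSetoid f K) ⁻¹' {q}, Metric.ball (h x) (s + ε))
    (fun q => convex_iInter₂ fun x _ => convex_ball _ _)
    (by
      intro q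
      obtain ⟨x₀, rfl⟩ := Quotient.mk_surjective q
      refine ⟨h x₀, ?_⟩
      have := hcl.eventually_nhds_fiber (p := fun x => dist (h x₀) (h x) < s + ε)
        (Quotient.mk _ x₀) (by
          intro x hx
          have hd : dist (h x₀) (h x) < s + ε := by
            rcases (collapse_eq_iff f K x x₀).1 hx with rfl | ⟨h1, h2⟩
            · simp only [dist_self]; linarith
            · rw [dist_comm]
              linarith [hpt x x₀ h1 h2]
          exact (isOpen_lt (continuous_const.dist h.continuous) continuous_const).mem_nhds hd)
      filter_upwards [this] with q hq
      exact mem_iInter₂.2 hq)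
  let G : C(X, ℝ) := ⟨fun x => g (Quotient.mk _ x), g.continuous.comp hcont⟩
  have hG : G ∈ {g : C(X, ℝ) | ∀ y ∉ K, fiberOsc f g y = 0} := by
    intro y hy
    apply Metric.diam_subsingleton
    rintro _ ⟨x, hx, rfl⟩ _ ⟨z, hz, rfl⟩
    have hx' : f x = y := hx
    have hz' : f z = y := hz
    exact congrArg g ((collapse_eq_iff f K x z).2 (Or.inr ⟨hx'.trans hz'.symm, hx' ▸ hy⟩))
  refine (Metric.infDist_le_dist_of_mem hG).trans ?_
  rw [ContinuousMap.dist_le (by linarith)]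
  intro x
  rw [dist_comm]
  exact (mem_ball.1 (mem_iInter₂.1 (hg (Quotient.mk _ x)) x rfl)).le
end

section
/- Let f : X → Y be a fully closed continuous surjection of a compact Hausdorff space X onto a metrizable compact space Y with metrizable fibers f⁻¹(y), y ∈ Y. For every h ∈ C(X) and every m ∈ ℕ set K_m = {y ∈ Y : Ω_f(h)(y) ≥ 1/m}. Then each K_m is finite, the sequence {K_m} is increasing, dist(h, Z_{K_m}) ≤ 1/m for every m, and hence h belongs to the norm-closure of the linear span of ∪_{m∈ℕ} Z_{K_m}. -/
open Set Metric Topology Filter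

theorem fc_abs_le_osc {X Y : Type*} [TopologicalSpace X] [CompactSpace X]
    (f : X → Y) (h : C(X, ℝ)) {x x' : X} (e : f x = f x') :
    |h x - h x'| ≤ fiberOsc f h (f x') := by
  rw [← Real.dist_eq]
  refine Metric.dist_le_diam_of_mem ?_ (mem_image_of_mem _ ?_) (mem_image_of_mem _ ?_)
  · exact (isCompact_range h.continuous).isBounded.subset (image_subset_range _ _)
  · simpa using e
  · simp

theorem fc_finite {X Y : Type*} [TopologicalSpace X] [CompactSpace X]
    [TopologicalSpace Y] (f : X → Y) (hfc : FullyClosed f) (h : C(X, ℝ)) (ε : ℝ) (hε : 0 < ε) :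
    {y : Y | ε ≤ fiberOsc f h y}.Finite := by
  set δ := ε / 3 with hδ
  have hδ0 : 0 < δ := by positivity
  set N := ⌈(2 * ‖h‖) / δ⌉₊
  have hfin : (⋃ j ∈ Set.Iic N, (f '' {x | h x ≤ -‖h‖ + j * δ} ∩
      f '' {x | -‖h‖ + j * δ + δ ≤ h x})).Finite := by
    refine (Set.finite_Iic N).biUnion fun j _ => hfc _ _ ?_ ?_ ?_
    · exact isClosed_le h.continuous continuous_const
    · exact isClosed_le continuous_const h.continuous
    · rw [Set.disjoint_left]
      intro x hx hx'
      simp only [mem_setOf_eq] at hx hx'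
      linarith
  refine hfin.subset fun y hy => ?_
  simp only [mem_setOf_eq] at hy
  have : ∃ s t, f s = y ∧ f t = y ∧ 2 * δ < h t - h s := by
    by_contra! hcon
    have : fiberOsc f h y ≤ 2 * δ := by
      refine Metric.diam_le_of_forall_dist_le (by positivity) ?_
      rintro _ ⟨a, ha, rfl⟩ _ ⟨b, hb, rfl⟩
      rw [Real.dist_eq, abs_le]
      have h1 := hcon a b ha hb
      have h2 := hcon b a hb ha
      constructor <;> linarith
    linarith
  obtain ⟨s, t, hs, ht, hst⟩ := this
  have hb : |h s| ≤ ‖h‖ := by simpa using h.norm_coe_le_norm s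
  rw [abs_le] at hb
  have hq : 0 ≤ (h s + ‖h‖) / δ := div_nonneg (by linarith) hδ0.le
  have c1 := Nat.le_ceil ((h s + ‖h‖) / δ)
  have c2 := Nat.ceil_lt_add_one hq
  rw [div_le_iff₀ hδ0] at c1
  have c3 : (⌈(h s + ‖h‖) / δ⌉₊ : ℝ) * δ < h s + ‖h‖ + δ := by
    have := mul_lt_mul_of_pos_right c2 hδ0
    rwa [add_mul, div_mul_cancel₀ _ hδ0.ne', one_mul] at this
  simp only [mem_iUnion]
  refine ⟨⌈(h s + ‖h‖) / δ⌉₊, ?_, ⟨s, ?_, hs⟩, ⟨t, ?_, ht⟩⟩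
  · refine Nat.ceil_mono ?_
    gcongr
    linarith
  · simp only [mem_setOf_eq]; linarith
  · simp only [mem_setOf_eq]; linarith

theorem fc_t2 {X Q : Type*} [TopologicalSpace X] [CompactSpace X] [T2Space X]
    [TopologicalSpace Q] (p : X → Q) (hp : Continuous p) (hs : Function.Surjective p)
    (hc : IsClosedMap p) : T2Space Q := by
  have hsing : ∀ q : Q, IsClosed (p ⁻¹' {q}) := by
    intro q
    obtain ⟨x, rfl⟩ := hs q
    have := hc {x} isClosed_singleton
    rw [image_singleton] at this
    exact this.preimage hp
  refine ⟨fun a b hab => ?_⟩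
  obtain ⟨U, V, hU, hV, haU, hbV, hd⟩ := normal_separation (hsing a) (hsing b)
    ((Set.disjoint_singleton.2 hab).preimage p)
  refine ⟨kernImage p U, kernImage p V, isClosedMap_iff_kernImage.1 hc hU,
    isClosedMap_iff_kernImage.1 hc hV, fun x hx => haU hx, fun x hx => hbV hx, ?_⟩
  rw [Set.disjoint_left]
  intro q h1 h2
  obtain ⟨x, rfl⟩ := hs q
  exact Set.disjoint_left.1 hd (h1 rfl) (h2 rfl)

def fcSetoid {X Y : Type*} (f : X → Y) (K : Set Y) : Setoid X where
  r x x' := x = x' ∨ (f x = f x' ∧ f x ∉ K)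
  iseqv := by
    refine ⟨fun x => Or.inl rfl, ?_, ?_⟩
    · rintro x y (rfl | ⟨h1, h2⟩)
      · exact Or.inl rfl
      · exact Or.inr ⟨h1.symm, h1 ▸ h2⟩
    · rintro x y z (rfl | ⟨h1, h2⟩) (rfl | ⟨h3, h4⟩)
      · exact Or.inl rfl
      · exact Or.inr ⟨h3, h4⟩
      · exact Or.inr ⟨h1, h2⟩
      · exact Or.inr ⟨h1.trans h3, h2⟩

theorem fc_mk_eq {X Y : Type*} (f : X → Y) (K : Set Y) (x x' : X) :
    (Quotient.mk (fcSetoid f K) x = Quotient.mk (fcSetoid f K) x') ↔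
      (x = x' ∨ (f x = f x' ∧ f x ∉ K)) := Quotient.eq

theorem fc_closedMap {X Y : Type*} [TopologicalSpace X] [CompactSpace X] [T2Space X]
    [TopologicalSpace Y] [T2Space Y] (f : X → Y) (hf : Continuous f)
    (hfc : FullyClosed f) (K : Set Y) : IsClosedMap (Quotient.mk (fcSetoid f K)) := by
  intro A hA
  rw [← (isQuotientMap_quotient_mk' (s := fcSetoid f K)).isClosed_preimage]
  change IsClosed (Quotient.mk (fcSetoid f K) ⁻¹' (Quotient.mk (fcSetoid f K) '' A))
  rw [← isOpen_compl_iff, isOpen_iff_mem_nhds]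
  intro x hx
  have key : ∀ z, z ∈ (Quotient.mk (fcSetoid f K) ⁻¹' (Quotient.mk (fcSetoid f K) '' A))ᶜ ↔
      (z ∉ A ∧ ∀ a ∈ A, f a = f z → f z ∈ K) := by
    intro z
    simp only [mem_compl_iff, mem_preimage, mem_image, fc_mk_eq, not_exists, not_and]
    constructor
    · intro H
      refine ⟨fun hz => H z hz (Or.inl rfl), fun a ha e => ?_⟩
      by_contra hK
      exact H a ha (Or.inr ⟨e, e ▸ hK⟩)
    · rintro ⟨h1, h2⟩ a ha (rfl | ⟨e, hK⟩)
      · exact h1 ha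
      · exact hK (e ▸ h2 a ha e)
  rw [key] at hx
  obtain ⟨hxA, hxK⟩ := hx
  by_cases hK : f x ∈ K
  · obtain ⟨V, hV, hVc, hVA⟩ := exists_mem_nhds_isClosed_subset (hA.isOpen_compl.mem_nhds hxA)
    have hfin := hfc V A hVc hA (Set.disjoint_left.2 fun z hz hz' => hVA hz hz')
    have hfin' := hfin.subset (Set.diff_subset (t := {f x}))
    have hO : f ⁻¹' ((f '' V ∩ f '' A) \ {f x})ᶜ ∈ 𝓝 x :=
      (hfin'.isClosed.isOpen_compl.preimage hf).mem_nhds (by simp)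
    filter_upwards [hV, hO] with z hzV hzO
    rw [key]
    refine ⟨fun hz => hVA hzV hz, fun a ha e => ?_⟩
    by_contra hzK
    refine hzO ⟨⟨⟨z, hzV, rfl⟩, ⟨a, ha, e⟩⟩, ?_⟩
    intro h'
    rw [mem_singleton_iff] at h'
    exact hzK (h' ▸ hK)
  · have hO : f ⁻¹' (f '' A)ᶜ ∈ 𝓝 x := by
      refine (((hA.isCompact.image hf).isClosed).isOpen_compl.preimage hf).mem_nhds ?_
      rintro ⟨a, ha, e⟩
      exact hK (hxK a ha e)
    filter_upwards [hO] with z hz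
    rw [key]
    exact ⟨fun h' => hz ⟨z, h', rfl⟩, fun a ha e => (hz ⟨a, ha, e⟩).elim⟩

theorem fc_approx {X Y : Type*} [TopologicalSpace X] [CompactSpace X] [T2Space X]
    [TopologicalSpace Y] [T2Space Y] (f : X → Y) (hf : Continuous f)
    (hfc : FullyClosed f) (h : C(X, ℝ)) (ε : ℝ) (hε : 0 < ε) :
    ∃ g : C(X, ℝ), (∀ y ∉ {y : Y | ε ≤ fiberOsc f h y}, fiberOsc f g y = 0) ∧
      dist h g ≤ ε := by
  set K := {y : Y | ε ≤ fiberOsc f h y} with hKdef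
  have hc := fc_closedMap f hf hfc K
  have hcont : Continuous (Quotient.mk (fcSetoid f K)) := continuous_quotient_mk'
  have hsur : Function.Surjective (Quotient.mk (fcSetoid f K)) := Quotient.mk_surjective
  haveI : T2Space (Quotient (fcSetoid f K)) := fc_t2 _ hcont hsur hc
  obtain ⟨k, hk⟩ := exists_continuous_forall_mem_convex_of_local_const
    (X := Quotient (fcSetoid f K)) (E := ℝ)
    (t := fun q => ⋂ x ∈ Quotient.mk (fcSetoid f K) ⁻¹' {q}, Metric.ball (h x) ε)
    (fun q => convex_iInter fun x => convex_iInter fun _ => convex_ball _ _) (by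
      intro q
      obtain ⟨x₀, rfl⟩ := hsur q
      refine ⟨h x₀, ?_⟩
      have := hc.eventually_nhds_fiber (p := fun x => h x₀ ∈ Metric.ball (h x) ε)
        (Quotient.mk (fcSetoid f K) x₀) (by
          intro x hx
          have hopen : IsOpen {x | h x₀ ∈ Metric.ball (h x) ε} := by
            simp only [Metric.mem_ball]
            exact isOpen_lt (by fun_prop) continuous_const
          refine hopen.mem_nhds ?_
          rw [mem_preimage, mem_singleton_iff, fc_mk_eq] at hx
          rcases hx with rfl | ⟨e, hxK⟩
          · simpa using hε
          · simp only [mem_setOf_eq, Metric.mem_ball, Real.dist_eq]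
            have := fc_abs_le_osc f h e.symm
            simp only [hKdef, mem_setOf_eq, not_le] at hxK
            linarith)
      filter_upwards [this] with q hq
      simpa using hq)
  refine ⟨k.comp ⟨_, hcont⟩, ?_, ?_⟩
  · intro y hy
    refine Metric.diam_subsingleton ?_
    rintro _ ⟨a, ha, rfl⟩ _ ⟨b, hb, rfl⟩
    rw [mem_preimage, mem_singleton_iff] at ha hb
    have : Quotient.mk (fcSetoid f K) a = Quotient.mk (fcSetoid f K) b :=
      (fc_mk_eq f K a b).2 (Or.inr ⟨ha.trans hb.symm, ha ▸ hy⟩)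
    simp [this]
  · rw [ContinuousMap.dist_le hε.le]
    intro x
    have := hk (Quotient.mk (fcSetoid f K) x)
    have := mem_iInter₂.1 this x rfl
    rw [Metric.mem_ball, dist_comm] at this
    exact this.le

/-- Proposition 3.5: with `K_m = {y : Ω_f(h)(y) ≥ 1/m}` (here indexed so
that the `m`-th set corresponds to `1/(m+1)`, `m : ℕ`), each `K_m` is finite, the sequence
is increasing, `dist(h, Z_{K_m}) ≤ 1/(m+1)`, and `h` lies in the closed linear span of
`⋃ₘ Z_{K_m}`. -/
theorem mem_closure_span_ZKm
    {X Y : Type*} [TopologicalSpace X] [CompactSpace X] [T2Space X]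
    [TopologicalSpace Y] [CompactSpace Y] [T2Space Y] [TopologicalSpace.MetrizableSpace Y]
    (f : X → Y) (hf : Continuous f) (hsurj : Function.Surjective f)
    (hfc : FullyClosed f)
    (hfib : ∀ y : Y, TopologicalSpace.MetrizableSpace (f ⁻¹' {y}))
    (h : C(X, ℝ)) :
    (∀ m : ℕ, {y : Y | 1 / ((m : ℝ) + 1) ≤ fiberOsc f h y}.Finite) ∧
    (∀ m n : ℕ, m ≤ n →
      {y : Y | 1 / ((m : ℝ) + 1) ≤ fiberOsc f h y} ⊆
        {y : Y | 1 / ((n : ℝ) + 1) ≤ fiberOsc f h y}) ∧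
    (∀ m : ℕ,
      Metric.infDist h
          {g : C(X, ℝ) |
            ∀ y ∉ {y : Y | 1 / ((m : ℝ) + 1) ≤ fiberOsc f h y}, fiberOsc f g y = 0} ≤
        1 / ((m : ℝ) + 1)) ∧
    h ∈ closure (Submodule.span ℝ
        (⋃ m : ℕ, {g : C(X, ℝ) |
          ∀ y ∉ {y : Y | 1 / ((m : ℝ) + 1) ≤ fiberOsc f h y}, fiberOsc f g y = 0}) :
      Set C(X, ℝ)) := by
  have hpos : ∀ m : ℕ, 0 < 1 / ((m : ℝ) + 1) := fun m => by positivity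
  refine ⟨fun m => fc_finite f hfc h _ (hpos m), ?_, ?_, ?_⟩
  · intro m n hmn y hy
    have h1 : 1 / ((n : ℝ) + 1) ≤ 1 / ((m : ℝ) + 1) :=
      one_div_le_one_div_of_le (by positivity) (by gcongr)
    exact h1.trans hy
  · intro m
    obtain ⟨g, hg, hd⟩ := fc_approx f hf hfc h _ (hpos m)
    refine le_trans (Metric.infDist_le_dist_of_mem (y := g) ?_) hd
    exact hg
  · rw [Metric.mem_closure_iff]
    intro ε hε
    obtain ⟨m, hm⟩ := exists_nat_one_div_lt hε
    obtain ⟨g, hg, hd⟩ := fc_approx f hf hfc h _ (hpos m)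
    exact ⟨g, Submodule.subset_span (mem_iUnion.2 ⟨m, hg⟩), hd.trans_lt hm⟩
end

section
/- Let L = [0,1] × [0,1] be the lexicographic square, i.e., the unit square with the order topology of the lexicographic order. Then the projection π : L → [0,1] onto the first factor is a continuous fully closed surjection onto the compact metric space [0,1], and every fiber π⁻¹(y), y ∈ [0,1], is metrizable. -/
open Set Metric Topology Filter

/-- The unit interval `[0,1]` as a subtype of `ℝ`. -/
abbrev UnitInt := Set.Icc (0 : ℝ) 1

/-- The lexicographic square `[0,1] ×ₗ [0,1]` carries the order topology of the
lexicographic order. -/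
instance : TopologicalSpace (Lex (UnitInt × UnitInt)) := Preorder.topology _

instance : OrderTopology (Lex (UnitInt × UnitInt)) := ⟨rfl⟩

theorem lexsq_aux_right (A : Set (Lex (UnitInt × UnitInt))) (hA : IsClosed A) (x : UnitInt)
    (h : ∃ᶠ t in 𝓝[>] x, t ∈ (fun p : Lex (UnitInt × UnitInt) => (ofLex p).1) '' A) :
    toLex (x, (1 : UnitInt)) ∈ A := by
  by_contra hx
  have hn : Aᶜ ∈ 𝓝 (toLex (x, (1 : UnitInt))) := hA.isOpen_compl.mem_nhds hx
  obtain ⟨t0, -, ht0⟩ := (h.and_eventually self_mem_nhdsWithin).exists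
  obtain ⟨u, hu, hsub⟩ := exists_Ico_subset_of_mem_nhds hn
    ⟨toLex (t0, 1), by rw [Prod.Lex.toLex_lt_toLex]; exact Or.inl ht0⟩
  have hu1 : x < (ofLex u).1 := by
    rcases Prod.Lex.lt_iff.1 hu with h1 | ⟨-, h2⟩
    · exact h1
    · exact absurd h2 (not_lt.2 (ofLex u).2.2.2)
  obtain ⟨t, ⟨a, ha, rfl⟩, ht⟩ := (h.and_eventually (Ioo_mem_nhdsGT hu1)).exists
  refine hsub ⟨?_, ?_⟩ ha
  · exact (Prod.Lex.lt_iff.2 (Or.inl ht.1)).le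
  · exact Prod.Lex.lt_iff.2 (Or.inl ht.2)

theorem lexsq_aux_left (A : Set (Lex (UnitInt × UnitInt))) (hA : IsClosed A) (x : UnitInt)
    (h : ∃ᶠ t in 𝓝[<] x, t ∈ (fun p : Lex (UnitInt × UnitInt) => (ofLex p).1) '' A) :
    toLex (x, (0 : UnitInt)) ∈ A := by
  by_contra hx
  have hn : Aᶜ ∈ 𝓝 (toLex (x, (0 : UnitInt))) := hA.isOpen_compl.mem_nhds hx
  obtain ⟨t0, -, ht0⟩ := (h.and_eventually self_mem_nhdsWithin).exists
  obtain ⟨u, hu, hsub⟩ := exists_Ioc_subset_of_mem_nhds hn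
    ⟨toLex (t0, 1), by rw [Prod.Lex.toLex_lt_toLex]; exact Or.inl ht0⟩
  have hu1 : (ofLex u).1 < x := by
    rcases Prod.Lex.lt_iff.1 hu with h1 | ⟨-, h2⟩
    · exact h1
    · exact absurd h2 (not_lt.2 (ofLex u).2.2.1)
  obtain ⟨t, ⟨a, ha, rfl⟩, ht⟩ := (h.and_eventually (Ioo_mem_nhdsLT hu1)).exists
  refine hsub ⟨?_, ?_⟩ ha
  · exact Prod.Lex.lt_iff.2 (Or.inl ht.1)
  · exact (Prod.Lex.lt_iff.2 (Or.inl ht.2)).le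

theorem lexsq_mono : Monotone (fun p : Lex (UnitInt × UnitInt) => (ofLex p).1) := by
  intro p q h
  rcases Prod.Lex.le_iff.1 h with h1 | ⟨h1, -⟩
  · exact h1.le
  · exact h1.le

theorem lexsq_surj :
    Function.Surjective (fun p : Lex (UnitInt × UnitInt) => (ofLex p).1) :=
  fun x => ⟨toLex (x, 0), rfl⟩

/-- Each fiber is order isomorphic to the unit interval. -/
def lexsqFiberIso (y : UnitInt) :
    ((fun p : Lex (UnitInt × UnitInt) => (ofLex p).1) ⁻¹' {y}) ≃o UnitInt where
  toFun p := (ofLex p.1).2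
  invFun s := ⟨toLex (y, s), rfl⟩
  left_inv := by
    rintro ⟨p, hp⟩
    apply Subtype.ext
    have hp' : (ofLex p).1 = y := hp
    subst hp'
    rfl
  right_inv s := rfl
  map_rel_iff' := by
    rintro ⟨p, hp⟩ ⟨q, hq⟩
    have hp' : (ofLex p).1 = y := hp
    have hq' : (ofLex q).1 = y := hq
    have : p ≤ q ↔ (ofLex p).2 ≤ (ofLex q).2 := by
      rw [Prod.Lex.le_iff, hp', hq']
      simp
    exact this.symm

/-- the first-coordinate projection of the lexicographic square is a
continuous fully closed surjection onto `[0,1]`, with all fibers metrizable. -/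
theorem lex_square_projection_fullyClosed :
    Continuous (fun p : Lex (UnitInt × UnitInt) => (ofLex p).1) ∧
    Function.Surjective (fun p : Lex (UnitInt × UnitInt) => (ofLex p).1) ∧
    FullyClosed (fun p : Lex (UnitInt × UnitInt) => (ofLex p).1) ∧
    ∀ y : UnitInt,
      TopologicalSpace.MetrizableSpace
        ((fun p : Lex (UnitInt × UnitInt) => (ofLex p).1) ⁻¹' {y}) := by
  refine ⟨lexsq_mono.continuous_of_surjective lexsq_surj, lexsq_surj, ?_, ?_⟩
  · intro A B hA hB hAB
    by_contra hinf
    obtain ⟨x, hx⟩ := Set.Infinite.exists_accPt_principal hinf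
    rw [accPt_iff_frequently_nhdsNE, ← Iio_union_Ioi, nhdsWithin_union, frequently_sup] at hx
    rcases hx with hx | hx
    · exact Set.disjoint_left.1 hAB (lexsq_aux_left A hA x (hx.mono fun _ h => h.1))
        (lexsq_aux_left B hB x (hx.mono fun _ h => h.2))
    · exact Set.disjoint_left.1 hAB (lexsq_aux_right A hA x (hx.mono fun _ h => h.1))
        (lexsq_aux_right B hB x (hx.mono fun _ h => h.2))
  · intro y
    haveI : OrdConnected ((fun p : Lex (UnitInt × UnitInt) => (ofLex p).1) ⁻¹' {y}) :=
      Set.OrdConnected.preimage_mono Set.ordConnected_singleton lexsq_mono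
    exact (lexsqFiberIso y).toHomeomorph.isEmbedding.metrizableSpace
end
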